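/- arXiv:2411.19293 — 2 statements merged into one kernel-verified Lean document; each statement's English description precedes it below -/
import Mathlib

section
/- For each α ∈ {1,…,n}, the tuple F_α = (F_{α1},…,F_{αn}) of curvature components of the soliton W satisfies L(F_α) = (1/2)·F_α pointwise on ℝⁿ; that is, each F_α is an eigenfunction of −L with eigenvalue −1/2 (corresponding to spatial translations of the soliton W). -/
open scoped BigOperators

noncomputable section

/-- Euclidean space `ℝⁿ`. -/
abbrev En (n : ℕ) := EuclideanSpace ℝ (Fin n)

/-- `n × n` real matrices, represented entrywise. -/
abbrev Mat (n : ℕ) := Fin n → Fin n → ℝ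

variable {n : ℕ}

/-- Frobenius inner product `⟨A,B⟩_F = tr(AᵀB) = Σ_{μν} A_{μν} B_{μν}`. -/
def fipE (A B : Mat n) : ℝ := ∑ μ, ∑ ν, A μ ν * B μ ν

/-- Frobenius norm. -/
def fnormE (A : Mat n) : ℝ := Real.sqrt (fipE A A)

/-- Matrix commutator `[A, B] = AB − BA`, entrywise. -/
def brkt (A B : Mat n) : Mat n := fun μ ν => ∑ k, (A μ k * B k ν - B μ k * A k ν)

/-- `A` is skew-symmetric. -/
def skewM (A : Mat n) : Prop := ∀ μ ν, A ν μ = -A μ ν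

/-- Partial derivative `∂_i f` of a scalar function on `ℝⁿ`. -/
def pder (i : Fin n) (f : En n → ℝ) (y : En n) : ℝ :=
  fderiv ℝ f y (EuclideanSpace.single i 1)

/-- Euclidean Laplacian `Δf = Σ_i ∂_i ∂_i f` of a scalar function on `ℝⁿ`. -/
def lapS (f : En n → ℝ) (y : En n) : ℝ := ∑ i, pder i (fun z => pder i f z) y

/-- Componentwise partial derivative `∂_i u` of a matrix-valued function on `ℝⁿ`. -/
def pderM (i : Fin n) (u : En n → Mat n) (y : En n) : Mat n :=
  fun μ ν => pder i (fun z => u z μ ν) y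

/-- Componentwise Laplacian `Δu` of a matrix-valued function on `ℝⁿ`. -/
def lapM (u : En n → Mat n) (y : En n) : Mat n := fun μ ν => lapS (fun z => u z μ ν) y

/-- The constant `a = √(n−2)/(2√2)`. -/
def aC (n : ℕ) : ℝ := Real.sqrt ((n : ℝ) - 2) / (2 * Real.sqrt 2)

/-- The constant `b = (1/2)(6n − 12 − (n+2)√(2n−4))`. -/
def bC (n : ℕ) : ℝ := (1 / 2) * (6 * (n : ℝ) - 12 - ((n : ℝ) + 2) * Real.sqrt (2 * (n : ℝ) - 4))

/-- `σ_i(y)`, the skew matrix with entries `(σ_i(y))^μ_ν = δ_{iν} y^μ − δ_{iμ} y^ν`. -/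
def sigmaM (i : Fin n) (y : En n) : Mat n :=
  fun μ ν => (if i = ν then y μ else 0) - (if i = μ then y ν else 0)

/-- The soliton connection `W_i(y) = σ_i(y)/(a|y|² + b)`. -/
def Wc (i : Fin n) (y : En n) : Mat n :=
  fun μ ν => sigmaM i y μ ν / (aC n * ‖y‖ ^ 2 + bC n)

/-- The curvature `F_{ij} = ∂_i W_j − ∂_j W_i + [W_i, W_j]` of the soliton connection `W`. -/
def Fc (i j : Fin n) (y : En n) : Mat n :=
  pderM i (Wc j) y - pderM j (Wc i) y + brkt (Wc i y) (Wc j y)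

/-- The linearized operator `L` of the rescaled Yang–Mills de Turck flow at the soliton `W`:
`(Lu)_j = Δu_j − (1/2)Σ_i y_i ∂_i u_j − (1/2)u_j + 2Σ_i [W_i, ∂_i u_j]
  + Σ_i [W_i, [W_i, u_j]] + 2Σ_i [u_i, F_{ij}]`. -/
def Lop (u : En n → Fin n → Mat n) (y : En n) (j : Fin n) : Mat n :=
  lapM (fun z => u z j) y
    - (1 / 2 : ℝ) • (∑ i, y i • pderM i (fun z => u z j) y)
    - (1 / 2 : ℝ) • u y j
    + (2 : ℝ) • ∑ i, brkt (Wc i y) (pderM i (fun z => u z j) y)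
    + ∑ i, brkt (Wc i y) (brkt (Wc i y) (u y j))
    + (2 : ℝ) • ∑ i, brkt (u y i) (Fc i j y)

/-- Squared Frobenius norm of a tuple of matrices: `‖u‖_F² = Σ_j ‖u_j‖_F²`. -/
def tnormSq (v : Fin n → Mat n) : ℝ := ∑ j, fipE (v j) (v j)

/-- The Gaussian weight `ρ(y) = e^{−|y|²/4}`. -/
def gauss (y : En n) : ℝ := Real.exp (-‖y‖ ^ 2 / 4)

end

/-!
Differentiate the soliton equation `Σ_i D_i F_{ij} = (1/2) Σ_i y_i F_{ij}` covariantly along `e_α`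
and antisymmetrize in `α` and `j`. On the left, commuting covariant derivatives (which produces
curvature) and the Bianchi identity give `Σ_i D_i D_i F_{αj} + 2 Σ_i [F_{αi}, F_{ij}]`; on the
right, the Bianchi identity alone gives `F_{αj} + (1/2) Σ_i y_i D_i F_{αj}`. The Coulomb gauge
`Σ_i ∂_i W_i = 0` and the radial gauge `Σ_i y_i W_i = 0` turn the resulting equation into
`L F_α = (1/2) F_α`.

The soliton is `W_i = (a |y|² + b)⁻¹ (y ∧ e_i)`, which satisfies both gauge conditions. Since
`Σ_i [u ∧ e_i, e_i ∧ v] = (n - 2) (u ∧ v)`, both sides of its soliton equation are multiples of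
`y ∧ e_j`, and comparing coefficients gives `n = 8 a² + 2` and `b = 8 a (1 - a) (2 a - 1)`.
-/

section PartialDerivatives

variable {ι F : Type*} [Fintype ι] [NormedAddCommGroup F] [NormedSpace ℝ F]
  {u v : EuclideanSpace ℝ ι → F} {y : EuclideanSpace ℝ ι}

/-- The partial derivative `∂_i u` of a vector-valued function, in the direction of the `i`-th
standard basis vector; it is `0` at the points where `u` is not differentiable. -/
noncomputable def partialDeriv (i : ι) (u : EuclideanSpace ℝ ι → F) (y : EuclideanSpace ℝ ι) : F :=
  fderiv ℝ u y (EuclideanSpace.basisFun ι ℝ i)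

theorem contDiff_partialDeriv {k m : WithTop ℕ∞} (hu : ContDiff ℝ m u) (hkm : k + 1 ≤ m) (i : ι) :
    ContDiff ℝ k (partialDeriv i u) :=
  (hu.fderiv_right hkm).clm_apply contDiff_const

theorem partialDeriv_neg (i : ι) : partialDeriv i (-u) y = -partialDeriv i u y := by
  simp [partialDeriv, fderiv_neg]

theorem partialDeriv_add (hu : DifferentiableAt ℝ u y) (hv : DifferentiableAt ℝ v y) (i : ι) :
    partialDeriv i (u + v) y = partialDeriv i u y + partialDeriv i v y := by
  simp [partialDeriv, fderiv_add hu hv]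

theorem partialDeriv_sub (hu : DifferentiableAt ℝ u y) (hv : DifferentiableAt ℝ v y) (i : ι) :
    partialDeriv i (u - v) y = partialDeriv i u y - partialDeriv i v y := by
  simp [partialDeriv, fderiv_sub hu hv]

theorem partialDeriv_sum {κ : Type*} [Fintype κ] {w : κ → EuclideanSpace ℝ ι → F}
    (hw : ∀ k, DifferentiableAt ℝ (w k) y) (i : ι) :
    partialDeriv i (fun z => ∑ k, w k z) y = ∑ k, partialDeriv i (w k) y := by
  simp [partialDeriv, fderiv_fun_sum fun k _ => hw k]

theorem partialDeriv_smul {f : EuclideanSpace ℝ ι → ℝ} (hf : DifferentiableAt ℝ f y)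
    (hu : DifferentiableAt ℝ u y) (i : ι) :
    partialDeriv i (fun z => f z • u z) y =
      partialDeriv i f y • u y + f y • partialDeriv i u y := by
  simp [partialDeriv, fderiv_fun_smul hf hu, add_comm]

theorem partialDeriv_const_smul (hu : DifferentiableAt ℝ u y) (c : ℝ) (i : ι) :
    partialDeriv i (c • u) y = c • partialDeriv i u y := by
  simp [partialDeriv, fderiv_const_smul hu]

theorem partialDeriv_smul_const {f : EuclideanSpace ℝ ι → ℝ} (hf : DifferentiableAt ℝ f y) (c : F)
    (i : ι) : partialDeriv i (fun z => f z • c) y = partialDeriv i f y • c := by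
  simp [partialDeriv, fderiv_smul_const hf]

theorem partialDeriv_pow {f : EuclideanSpace ℝ ι → ℝ} (hf : DifferentiableAt ℝ f y) (k : ℕ)
    (i : ι) : partialDeriv i (fun z => f z ^ k) y = k * f y ^ (k - 1) * partialDeriv i f y := by
  simp [partialDeriv, fderiv_fun_pow k hf]

theorem partialDeriv_inv {f : EuclideanSpace ℝ ι → ℝ} (hf : DifferentiableAt ℝ f y) (h₀ : f y ≠ 0)
    (i : ι) : partialDeriv i (fun z => (f z)⁻¹) y = -((f y)⁻¹ ^ 2 * partialDeriv i f y) := by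
  have hderiv := ((hasDerivAt_inv h₀).comp_hasFDerivAt y hf.hasFDerivAt).fderiv
  rw [partialDeriv, partialDeriv]
  exact (DFunLike.congr_fun hderiv _).trans (by simp)

theorem partialDeriv_comm (hu : ContDiff ℝ 2 u) (i j : ι) :
    partialDeriv i (partialDeriv j u) y = partialDeriv j (partialDeriv i u) y := by
  have hdiff : DifferentiableAt ℝ (fderiv ℝ u) y :=
    (hu.fderiv_right (m := 1) (by norm_num)).differentiable (by norm_num) y
  have hexp (k l : ι) : partialDeriv k (partialDeriv l u) y =
      fderiv ℝ (fderiv ℝ u) y (EuclideanSpace.basisFun ι ℝ k) (EuclideanSpace.basisFun ι ℝ l) := by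
    change fderiv ℝ (fun z => fderiv ℝ u z (EuclideanSpace.basisFun ι ℝ l)) y _ = _
    simp [fderiv_clm_apply hdiff]
  rw [hexp, hexp, (hu.contDiffAt.isSymmSndFDerivAt (by simp)).eq]

theorem partialDeriv_linearMap [DecidableEq ι] (f : EuclideanSpace ℝ ι →ₗ[ℝ] F) (i : ι) :
    partialDeriv i f y = f (EuclideanSpace.single i 1) := by
  rw [← EuclideanSpace.basisFun_apply]
  exact DFunLike.congr_fun (f.toContinuousLinearMap.fderiv (x := y)) _

theorem partialDeriv_coord [DecidableEq ι] (i j : ι) :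
    partialDeriv i (fun z : EuclideanSpace ℝ ι => z j) y = if i = j then 1 else 0 := by
  have h := partialDeriv_linearMap (y := y) (EuclideanSpace.proj j : _ →L[ℝ] ℝ).toLinearMap i
  simpa [Pi.single_apply, eq_comm] using h

theorem partialDeriv_mul_norm_sq_add (a b : ℝ) (i : ι) :
    partialDeriv i (fun z : EuclideanSpace ℝ ι => a * ‖z‖ ^ 2 + b) y = 2 * a * y i := by
  have hnorm : DifferentiableAt ℝ (fun z : EuclideanSpace ℝ ι => ‖z‖ ^ 2) y :=
    (contDiff_norm_sq ℝ (n := 1)).differentiable one_ne_zero y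
  simp [partialDeriv, fderiv_const_mul hnorm, fderiv_norm_sq_apply]
  ring

end PartialDerivatives

section Connection

attribute [local instance] LieRing.ofAssociativeRing

variable {ι 𝔸 : Type*} [Fintype ι] [NormedRing 𝔸] [NormedAlgebra ℝ 𝔸]
  {A u : ι → EuclideanSpace ℝ ι → 𝔸} {v w : EuclideanSpace ℝ ι → 𝔸} {y : EuclideanSpace ℝ ι}

/-- The covariant derivative `D_i v = ∂_i v + [A_i, v]` of a function with values in the algebra
in which the connection `A` takes its values (the adjoint representation). -/
noncomputable def covDeriv (A : ι → EuclideanSpace ℝ ι → 𝔸) (i : ι)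
    (v : EuclideanSpace ℝ ι → 𝔸) (y : EuclideanSpace ℝ ι) : 𝔸 :=
  partialDeriv i v y + ⁅A i y, v y⁆

/-- The curvature `F_{ij} = ∂_i A_j - ∂_j A_i + [A_i, A_j]` of the connection `A`. -/
noncomputable def curvature (A : ι → EuclideanSpace ℝ ι → 𝔸) (i j : ι)
    (y : EuclideanSpace ℝ ι) : 𝔸 :=
  partialDeriv i (A j) y - partialDeriv j (A i) y + ⁅A i y, A j y⁆

theorem curvature_swap (i j : ι) : curvature A j i = -curvature A i j := by
  funext z
  rw [Pi.neg_apply, curvature, curvature, ← lie_skew]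
  abel

theorem contDiff_lie {E : Type*} [NormedAddCommGroup E] [NormedSpace ℝ E] {f g : E → 𝔸}
    {k : WithTop ℕ∞} (hf : ContDiff ℝ k f) (hg : ContDiff ℝ k g) :
    ContDiff ℝ k (fun z => ⁅f z, g z⁆) := by
  simpa only [Ring.lie_def] using (hf.mul hg).sub (hg.mul hf)

theorem partialDeriv_lie (hv : DifferentiableAt ℝ v y) (hw : DifferentiableAt ℝ w y) (i : ι) :
    partialDeriv i (fun z => ⁅v z, w z⁆) y =
      ⁅partialDeriv i v y, w y⁆ + ⁅v y, partialDeriv i w y⁆ := by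
  simp only [Ring.lie_def, partialDeriv, fderiv_fun_sub (hv.fun_mul hw) (hw.fun_mul hv),
    fderiv_fun_mul' hv hw, fderiv_fun_mul' hw hv, add_apply, sub_apply, smul_apply, smul_eq_mul,
    MulOpposite.smul_eq_mul_unop, MulOpposite.unop_op]
  abel

theorem contDiff_covDeriv {k m : WithTop ℕ∞} (hA : ∀ i, ContDiff ℝ k (A i))
    (hv : ContDiff ℝ m v) (hkm : k + 1 ≤ m) (i : ι) : ContDiff ℝ k (covDeriv A i v) :=
  (contDiff_partialDeriv hv hkm i).add
    (contDiff_lie (hA i) (hv.of_le (le_self_add.trans hkm)))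

theorem contDiff_curvature {k m : WithTop ℕ∞} (hA : ∀ i, ContDiff ℝ m (A i)) (hkm : k + 1 ≤ m)
    (i j : ι) : ContDiff ℝ k (curvature A i j) :=
  have hA' (l : ι) : ContDiff ℝ k (A l) := (hA l).of_le (le_self_add.trans hkm)
  ((contDiff_partialDeriv (hA j) hkm i).sub (contDiff_partialDeriv (hA i) hkm j)).add
    (contDiff_lie (hA' i) (hA' j))

theorem covDeriv_neg (i : ι) : covDeriv A i (-v) y = -covDeriv A i v y := by
  simp only [covDeriv, partialDeriv_neg, Pi.neg_apply, lie_neg]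
  abel

theorem covDeriv_sub (hv : DifferentiableAt ℝ v y) (hw : DifferentiableAt ℝ w y) (i : ι) :
    covDeriv A i (v - w) y = covDeriv A i v y - covDeriv A i w y := by
  simp only [covDeriv, partialDeriv_sub hv hw, Pi.sub_apply, lie_sub]
  abel

theorem covDeriv_sum (hu : ∀ k, DifferentiableAt ℝ (u k) y) (i : ι) :
    covDeriv A i (fun z => ∑ k, u k z) y = ∑ k, covDeriv A i (u k) y := by
  simp only [covDeriv, partialDeriv_sum hu, lie_sum, Finset.sum_add_distrib]

theorem covDeriv_smul {f : EuclideanSpace ℝ ι → ℝ} (hf : DifferentiableAt ℝ f y)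
    (hv : DifferentiableAt ℝ v y) (i : ι) :
    covDeriv A i (fun z => f z • v z) y = partialDeriv i f y • v y + f y • covDeriv A i v y := by
  simp only [covDeriv, partialDeriv_smul hf hv, lie_smul, smul_add, add_assoc]

theorem covDeriv_sum_coord_smul (hu : ∀ k, DifferentiableAt ℝ (u k) y) (i : ι) :
    covDeriv A i (fun z => ∑ k, z k • u k z) y = u i y + ∑ k, y k • covDeriv A i (u k) y := by
  classical
  have hcoord (k : ι) : DifferentiableAt ℝ (fun z : EuclideanSpace ℝ ι => z k) y := by fun_prop
  rw [covDeriv_sum fun k => (hcoord k).fun_smul (hu k)]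
  simp [covDeriv_smul (hcoord _) (hu _), partialDeriv_coord, Finset.sum_add_distrib]

theorem covDeriv_covDeriv (hA : ∀ i, ContDiff ℝ 1 (A i)) (hv : ContDiff ℝ 2 v) (i j : ι) :
    covDeriv A i (covDeriv A j v) y =
      partialDeriv i (partialDeriv j v) y + ⁅partialDeriv i (A j) y, v y⁆ +
        ⁅A j y, partialDeriv i v y⁆ + ⁅A i y, partialDeriv j v y⁆ + ⁅A i y, ⁅A j y, v y⁆⁆ := by
  have hdA : DifferentiableAt ℝ (A j) y := (hA j).differentiable one_ne_zero y
  have hdv : Differentiable ℝ v := hv.differentiable two_ne_zero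
  have hdv' : DifferentiableAt ℝ (partialDeriv j v) y :=
    (contDiff_partialDeriv (k := 1) hv (by norm_num) j).differentiable one_ne_zero y
  have hlie : DifferentiableAt ℝ (fun z => ⁅A j z, v z⁆) y :=
    (contDiff_lie (hA j) (hv.of_le one_le_two)).differentiable one_ne_zero y
  have hexp : covDeriv A j v = partialDeriv j v + fun z => ⁅A j z, v z⁆ := rfl
  rw [covDeriv, hexp, partialDeriv_add hdv' hlie, partialDeriv_lie hdA (hdv y), Pi.add_apply,
    lie_add]
  abel

theorem covDeriv_commutator (hA : ∀ i, ContDiff ℝ 1 (A i)) (hv : ContDiff ℝ 2 v) (i j : ι) :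
    covDeriv A i (covDeriv A j v) y - covDeriv A j (covDeriv A i v) y =
      ⁅curvature A i j y, v y⁆ := by
  rw [covDeriv_covDeriv hA hv, covDeriv_covDeriv hA hv, partialDeriv_comm hv i j, curvature,
    add_lie, sub_lie, lie_lie]
  abel

theorem covDeriv_curvature_swap (i j k : ι) :
    covDeriv A i (curvature A k j) y = -covDeriv A i (curvature A j k) y := by
  rw [curvature_swap, covDeriv_neg]

theorem covDeriv_curvature (hA : ∀ i, ContDiff ℝ 2 (A i)) (i j k : ι) :
    covDeriv A i (curvature A j k) y =
      partialDeriv i (partialDeriv j (A k)) y - partialDeriv i (partialDeriv k (A j)) y +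
        (⁅partialDeriv i (A j) y, A k y⁆ + ⁅A j y, partialDeriv i (A k) y⁆) +
        ⁅A i y, partialDeriv j (A k) y - partialDeriv k (A j) y + ⁅A j y, A k y⁆⁆ := by
  have hdA (l : ι) : DifferentiableAt ℝ (A l) y := (hA l).differentiable two_ne_zero y
  have hdA' (l m : ι) : DifferentiableAt ℝ (partialDeriv l (A m)) y :=
    (contDiff_partialDeriv (k := 1) (hA m) (by norm_num) l).differentiable one_ne_zero y
  have hlie : DifferentiableAt ℝ (fun z => ⁅A j z, A k z⁆) y :=
    (contDiff_lie (hA j) (hA k)).differentiable two_ne_zero y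
  have hexp : curvature A j k =
      partialDeriv j (A k) - partialDeriv k (A j) + fun z => ⁅A j z, A k z⁆ := rfl
  rw [covDeriv, hexp, partialDeriv_add ((hdA' _ _).sub (hdA' _ _)) hlie,
    partialDeriv_sub (hdA' _ _) (hdA' _ _), partialDeriv_lie (hdA j) (hdA k)]
  rfl

theorem bianchi_identity (hA : ∀ i, ContDiff ℝ 2 (A i)) (i j k : ι) :
    covDeriv A i (curvature A j k) y + covDeriv A j (curvature A k i) y +
      covDeriv A k (curvature A i j) y = 0 := by
  -- The second derivatives cancel by symmetry, and the triple brackets by the Jacobi identity.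
  simp only [covDeriv_curvature hA, partialDeriv_comm (hA k) i j, partialDeriv_comm (hA j) i k,
    partialDeriv_comm (hA i) j k, Ring.lie_def]
  noncomm_ring

theorem covDeriv_curvature_sub (hA : ∀ i, ContDiff ℝ 2 (A i)) (α i j : ι) :
    covDeriv A α (curvature A i j) - covDeriv A j (curvature A i α) =
      covDeriv A i (curvature A α j) := by
  funext z
  rw [Pi.sub_apply, covDeriv_curvature_swap j α i, sub_neg_eq_add, ← sub_eq_zero,
    ← bianchi_identity hA α i j, covDeriv_curvature_swap i α j]
  abel

/-- The divergence `Σ_i D_i F_{ij}` of the curvature, that is, `-(d_A)^* F`. -/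
noncomputable def curvatureDiv (A : ι → EuclideanSpace ℝ ι → 𝔸) (j : ι)
    (y : EuclideanSpace ℝ ι) : 𝔸 :=
  ∑ i, covDeriv A i (curvature A i j) y

theorem covDeriv_curvatureDiv (hA : ∀ i, ContDiff ℝ 3 (A i)) (α j : ι) :
    covDeriv A α (curvatureDiv A j) y =
      ∑ i, (covDeriv A i (covDeriv A α (curvature A i j)) y +
        ⁅curvature A α i y, curvature A i j y⁆) := by
  have hA₁ (i : ι) : ContDiff ℝ 1 (A i) := (hA i).of_le (by norm_num)
  have hF (i : ι) : ContDiff ℝ 2 (curvature A i j) := contDiff_curvature hA (by norm_num) i j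
  have hdiff (i : ι) : DifferentiableAt ℝ (covDeriv A i (curvature A i j)) y :=
    (contDiff_covDeriv hA₁ (hF i) (by norm_num) i).differentiable one_ne_zero y
  have hexp : curvatureDiv A j = fun z => ∑ i, covDeriv A i (curvature A i j) z := rfl
  rw [hexp, covDeriv_sum hdiff]
  exact Finset.sum_congr rfl fun i _ => by rw [← covDeriv_commutator hA₁ (hF i)]; abel

theorem weitzenbock_curvature (hA : ∀ i, ContDiff ℝ 3 (A i)) (α j : ι) :
    covDeriv A α (curvatureDiv A j) y - covDeriv A j (curvatureDiv A α) y =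
      ∑ i, covDeriv A i (covDeriv A i (curvature A α j)) y +
        (2 : ℝ) • ∑ i, ⁅curvature A α i y, curvature A i j y⁆ := by
  have hA₁ (i : ι) : ContDiff ℝ 1 (A i) := (hA i).of_le (by norm_num)
  have hA₂ (i : ι) : ContDiff ℝ 2 (A i) := (hA i).of_le (by norm_num)
  have hdiff (i k l : ι) : DifferentiableAt ℝ (covDeriv A k (curvature A i l)) y :=
    (contDiff_covDeriv hA₁ (contDiff_curvature hA (k := 2) (by norm_num) i l) (by norm_num)
      k).differentiable one_ne_zero y
  have hlie (i : ι) : ⁅curvature A j i y, curvature A i α y⁆ =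
      -⁅curvature A α i y, curvature A i j y⁆ := by
    rw [curvature_swap i j, curvature_swap α i, Pi.neg_apply, Pi.neg_apply, neg_lie, lie_neg,
      neg_neg, lie_skew]
  simp only [covDeriv_curvatureDiv hA, ← covDeriv_curvature_sub hA₂ α _ j,
    covDeriv_sub (hdiff _ _ _) (hdiff _ _ _), hlie, Finset.sum_add_distrib,
    Finset.sum_sub_distrib, Finset.sum_neg_distrib]
  module

/-- `A` solves the Yang-Mills shrinking soliton equation `Σ_i D_i F_{ij} = (1/2) Σ_i y_i F_{ij}`:
in a gauge with `Σ_i y_i A_i = 0`, this says that `(-t)^{-1/2} A((-t)^{-1/2} x)` solves the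
Yang-Mills flow for `t < 0`. -/
def IsShrinkingSoliton (A : ι → EuclideanSpace ℝ ι → 𝔸) : Prop :=
  ∀ j y, curvatureDiv A j y = (1 / 2 : ℝ) • ∑ i, y i • curvature A i j y

theorem covDeriv_curvatureDiv_of_isShrinkingSoliton (hA : ∀ i, ContDiff ℝ 2 (A i))
    (h : IsShrinkingSoliton A) (α j : ι) :
    covDeriv A α (curvatureDiv A j) y =
      (1 / 2 : ℝ) • (curvature A α j y + ∑ i, y i • covDeriv A α (curvature A i j) y) := by
  have hF (i : ι) : Differentiable ℝ (curvature A i j) :=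
    (contDiff_curvature (k := 1) hA (by norm_num) i j).differentiable one_ne_zero
  have hsum : DifferentiableAt ℝ (fun z => ∑ i, z i • curvature A i j z) y := by fun_prop
  rw [show curvatureDiv A j = fun z => (1 / 2 : ℝ) • ∑ i, z i • curvature A i j z from
    funext (h j), covDeriv_smul (differentiableAt_const _) hsum,
    covDeriv_sum_coord_smul fun i => hF i y]
  simp [partialDeriv]

theorem sum_covDeriv_covDeriv_curvature_of_isShrinkingSoliton (hA : ∀ i, ContDiff ℝ 3 (A i))
    (h : IsShrinkingSoliton A) (α j : ι) :
    ∑ i, covDeriv A i (covDeriv A i (curvature A α j)) y +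
        (2 : ℝ) • ∑ i, ⁅curvature A α i y, curvature A i j y⁆ =
      curvature A α j y + (1 / 2 : ℝ) • ∑ i, y i • covDeriv A i (curvature A α j) y := by
  have hA₂ (i : ι) : ContDiff ℝ 2 (A i) := (hA i).of_le (by norm_num)
  rw [← weitzenbock_curvature hA]
  simp only [covDeriv_curvatureDiv_of_isShrinkingSoliton hA₂ h, ← covDeriv_curvature_sub hA₂ α _ j,
    Pi.sub_apply, smul_sub, Finset.sum_sub_distrib, curvature_swap α j, Pi.neg_apply]
  module

/-- The linearization of the rescaled Yang-Mills-DeTurck flow at a connection `A` with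
`Σ_i ∂_i A_i = 0`, acting on the tuple `u`: the operator `L` with `A` in place of `W`. -/
noncomputable def linearizedFlow (A u : ι → EuclideanSpace ℝ ι → 𝔸) (j : ι)
    (y : EuclideanSpace ℝ ι) : 𝔸 :=
  ∑ i, partialDeriv i (partialDeriv i (u j)) y - (1 / 2 : ℝ) • ∑ i, y i • partialDeriv i (u j) y
    - (1 / 2 : ℝ) • u j y + (2 : ℝ) • ∑ i, ⁅A i y, partialDeriv i (u j) y⁆
    + ∑ i, ⁅A i y, ⁅A i y, u j y⁆⁆ + (2 : ℝ) • ∑ i, ⁅u i y, curvature A i j y⁆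

theorem sum_covDeriv_covDeriv_of_coulomb (hA : ∀ i, ContDiff ℝ 1 (A i)) (hv : ContDiff ℝ 2 v)
    (hcoulomb : ∑ i, partialDeriv i (A i) y = 0) :
    ∑ i, covDeriv A i (covDeriv A i v) y =
      ∑ i, partialDeriv i (partialDeriv i v) y + (2 : ℝ) • ∑ i, ⁅A i y, partialDeriv i v y⁆ +
        ∑ i, ⁅A i y, ⁅A i y, v y⁆⁆ := by
  simp only [covDeriv_covDeriv hA hv, Finset.sum_add_distrib, ← sum_lie, hcoulomb, zero_lie]
  module

theorem sum_coord_smul_covDeriv_of_radial (hradial : ∑ i, y i • A i y = 0) :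
    ∑ i, y i • covDeriv A i v y = ∑ i, y i • partialDeriv i v y := by
  simp only [covDeriv, smul_add, Finset.sum_add_distrib, ← smul_lie, ← sum_lie, hradial, zero_lie,
    add_zero]

theorem linearizedFlow_curvature_of_isShrinkingSoliton (hA : ∀ i, ContDiff ℝ 3 (A i))
    (h : IsShrinkingSoliton A) (hcoulomb : ∑ i, partialDeriv i (A i) y = 0)
    (hradial : ∑ i, y i • A i y = 0) (α j : ι) :
    linearizedFlow A (curvature A α) j y = (1 / 2 : ℝ) • curvature A α j y := by
  have hrough := sum_covDeriv_covDeriv_of_coulomb (fun i => (hA i).of_le (by norm_num))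
    (contDiff_curvature hA (by norm_num) α j) hcoulomb
  have heq := sum_covDeriv_covDeriv_curvature_of_isShrinkingSoliton (y := y) hA h α j
  rw [hrough, sum_coord_smul_covDeriv_of_radial hradial] at heq
  rw [linearizedFlow]
  linear_combination (norm := module) heq

end Connection

section SolitonConnection

open scoped Matrix.Norms.Operator

attribute [local instance] LieRing.ofAssociativeRing

local notation "𝐞[" i "]" => EuclideanSpace.single i (1 : ℝ)

variable {ι : Type*}

/-- The skew-symmetric matrix `u ∧ v = u vᵀ - v uᵀ`, bilinear in the vectors `u` and `v`. -/
noncomputable def wedge : EuclideanSpace ℝ ι →ₗ[ℝ] EuclideanSpace ℝ ι →ₗ[ℝ] Matrix ι ι ℝ :=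
  let e := (WithLp.linearEquiv 2 ℝ (ι → ℝ)).toLinearMap
  let B : EuclideanSpace ℝ ι →ₗ[ℝ] EuclideanSpace ℝ ι →ₗ[ℝ] Matrix ι ι ℝ :=
    (vecMulVecBilin ℝ ℝ).compl₁₂ e e
  B - B.flip

theorem wedge_eq_vecMulVec (u v : EuclideanSpace ℝ ι) :
    wedge u v = Matrix.vecMulVec u v - Matrix.vecMulVec v u := rfl

theorem wedge_self (u : EuclideanSpace ℝ ι) : wedge u u = 0 := sub_self _

theorem wedge_swap (u v : EuclideanSpace ℝ ι) : wedge v u = -wedge u v := (neg_sub _ _).symm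

theorem differentiable_wedge_left [Finite ι] (v : EuclideanSpace ℝ ι) :
    Differentiable ℝ fun z => wedge z v := by
  have := Fintype.ofFinite ι
  exact (wedge.flip v).toContinuousLinearMap.differentiable

variable [Fintype ι]

theorem contDiff_wedge_left {k : WithTop ℕ∞} (v : EuclideanSpace ℝ ι) :
    ContDiff ℝ k fun z => wedge z v :=
  (wedge.flip v).toContinuousLinearMap.contDiff

variable {a b : ℝ} {y : EuclideanSpace ℝ ι}

theorem contDiff_mul_norm_sq_add {k : WithTop ℕ∞} :
    ContDiff ℝ k fun z : EuclideanSpace ℝ ι => a * ‖z‖ ^ 2 + b :=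
  (contDiff_const.mul (contDiff_norm_sq ℝ)).add contDiff_const

theorem differentiable_mul_norm_sq_add :
    Differentiable ℝ fun z : EuclideanSpace ℝ ι => a * ‖z‖ ^ 2 + b :=
  (contDiff_mul_norm_sq_add (k := 1)).differentiable one_ne_zero

theorem partialDeriv_inv_mul_norm_sq_add (h : a * ‖y‖ ^ 2 + b ≠ 0) (i : ι) :
    partialDeriv i (fun z => (a * ‖z‖ ^ 2 + b)⁻¹) y = -2 * a * y i * (a * ‖y‖ ^ 2 + b)⁻¹ ^ 2 := by
  rw [partialDeriv_inv (differentiable_mul_norm_sq_add y) h, partialDeriv_mul_norm_sq_add]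
  ring

variable [DecidableEq ι]

theorem partialDeriv_wedge (v : EuclideanSpace ℝ ι) (i : ι) :
    partialDeriv i (fun z => wedge z v) y = wedge 𝐞[i] v :=
  partialDeriv_linearMap (wedge.flip v) i

theorem lie_wedge_wedge (u v w x : EuclideanSpace ℝ ι) :
    ⁅wedge u v, wedge w x⁆ = inner ℝ v w • wedge u x - inner ℝ v x • wedge u w
      - inner ℝ u w • wedge v x + inner ℝ u x • wedge v w := by
  have hinner (p q : EuclideanSpace ℝ ι) : p.ofLp ⬝ᵥ q.ofLp = inner ℝ p q := by
    simp [PiLp.inner_apply, dotProduct, mul_comm]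
  simp only [wedge_eq_vecMulVec, Ring.lie_def, sub_mul, mul_sub, Matrix.vecMulVec_mul_vecMulVec,
    Matrix.vecMulVec_smul, hinner, real_inner_comm u, real_inner_comm v]
  module

theorem sum_coord_smul_map_single {F : Type*} [AddCommGroup F] [Module ℝ F]
    (f : EuclideanSpace ℝ ι →ₗ[ℝ] F) (v : EuclideanSpace ℝ ι) :
    ∑ i, v i • f 𝐞[i] = f v := by
  simpa using congrArg f ((EuclideanSpace.basisFun ι ℝ).sum_repr v)

theorem sum_coord_smul_wedge_single (u v : EuclideanSpace ℝ ι) :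
    ∑ i, v i • wedge u 𝐞[i] = wedge u v :=
  sum_coord_smul_map_single (wedge u) v

theorem sum_coord_smul_single_wedge (u v : EuclideanSpace ℝ ι) :
    ∑ i, u i • wedge 𝐞[i] v = wedge u v :=
  sum_coord_smul_map_single (wedge.flip v) u

theorem sum_lie_wedge_single_wedge_single (u v : EuclideanSpace ℝ ι) :
    ∑ i, ⁅wedge u 𝐞[i], wedge 𝐞[i] v⁆ = (Fintype.card ι - 2 : ℝ) • wedge u v := by
  have hexp (i : ι) : ⁅wedge u 𝐞[i], wedge 𝐞[i] v⁆ =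
      wedge u v - v i • wedge u 𝐞[i] - u i • wedge 𝐞[i] v := by
    simp [lie_wedge_wedge, wedge_self, EuclideanSpace.inner_single_left,
      EuclideanSpace.inner_single_right]
  simp only [hexp, Finset.sum_sub_distrib, sum_coord_smul_wedge_single,
    sum_coord_smul_single_wedge, Finset.sum_const, Finset.card_univ,
    ← Nat.cast_smul_eq_nsmul ℝ]
  module

/-- The connection `W_i(y) = (a |y|² + b)⁻¹ (y ∧ e_i)` on `ℝ^ι`. -/
noncomputable def solitonConnection (a b : ℝ) (i : ι) (y : EuclideanSpace ℝ ι) : Matrix ι ι ℝ :=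
  (a * ‖y‖ ^ 2 + b)⁻¹ • wedge y 𝐞[i]

theorem contDiff_solitonConnection {k : WithTop ℕ∞}
    (h : ∀ z : EuclideanSpace ℝ ι, a * ‖z‖ ^ 2 + b ≠ 0) (i : ι) :
    ContDiff ℝ k (solitonConnection a b i) :=
  (contDiff_mul_norm_sq_add.inv h).smul (contDiff_wedge_left _)

theorem partialDeriv_solitonConnection (h : a * ‖y‖ ^ 2 + b ≠ 0) (i j : ι) :
    partialDeriv i (solitonConnection a b j) y =
      (a * ‖y‖ ^ 2 + b)⁻¹ • wedge 𝐞[i] 𝐞[j] -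
        (2 * a * (a * ‖y‖ ^ 2 + b)⁻¹ ^ 2) • y i • wedge y 𝐞[j] := by
  have hexp : solitonConnection a b j = fun z => (a * ‖z‖ ^ 2 + b)⁻¹ • wedge z 𝐞[j] := rfl
  rw [hexp, partialDeriv_smul ((differentiable_mul_norm_sq_add y).fun_inv h)
    (differentiable_wedge_left _ y), partialDeriv_inv_mul_norm_sq_add h, partialDeriv_wedge]
  module

theorem sum_partialDeriv_solitonConnection (h : a * ‖y‖ ^ 2 + b ≠ 0) :
    ∑ i, partialDeriv i (solitonConnection a b i) y = 0 := by
  simp only [partialDeriv_solitonConnection h, wedge_self, smul_zero, zero_sub,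
    Finset.sum_neg_distrib, ← Finset.smul_sum, sum_coord_smul_wedge_single, neg_zero]

theorem sum_coord_smul_solitonConnection : ∑ i, y i • solitonConnection a b i y = 0 := by
  simp only [solitonConnection, smul_comm _ (a * ‖y‖ ^ 2 + b)⁻¹, ← Finset.smul_sum,
    sum_coord_smul_wedge_single, wedge_self, smul_zero]

/-- The polynomial `(a |y|² + b)² F_{ij}(y)`, where `F` is the curvature of
`solitonConnection a b`. -/
noncomputable def solitonCurvatureNumerator (a b : ℝ) (i j : ι) (y : EuclideanSpace ℝ ι) :
    Matrix ι ι ℝ :=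
  (1 - 2 * a) • (y i • wedge y 𝐞[j] - y j • wedge y 𝐞[i]) +
    ((2 * a - 1) * ‖y‖ ^ 2 + 2 * b) • wedge 𝐞[i] 𝐞[j]

theorem curvature_solitonConnection (h : ∀ z : EuclideanSpace ℝ ι, a * ‖z‖ ^ 2 + b ≠ 0) (i j : ι) :
    curvature (solitonConnection a b) i j =
      fun y => (a * ‖y‖ ^ 2 + b)⁻¹ ^ 2 • solitonCurvatureNumerator a b i j y := by
  funext y
  have hlie : ⁅wedge y 𝐞[i], wedge y 𝐞[j]⁆ =
      y i • wedge y 𝐞[j] - y j • wedge y 𝐞[i] - ‖y‖ ^ 2 • wedge 𝐞[i] 𝐞[j] := by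
    simp only [lie_wedge_wedge, wedge_self, EuclideanSpace.inner_single_left,
      EuclideanSpace.inner_single_right, real_inner_self_eq_norm_sq, wedge_swap y 𝐞[i], map_one,
      conj_trivial, one_mul, smul_zero, smul_neg]
    abel
  rw [curvature, partialDeriv_solitonConnection (h y), partialDeriv_solitonConnection (h y),
    wedge_swap 𝐞[i] 𝐞[j], solitonConnection, solitonConnection, smul_lie, lie_smul, hlie,
    solitonCurvatureNumerator]
  match_scalars <;> field [h y]

theorem sum_coord_smul_solitonCurvatureNumerator (j : ι) :
    ∑ i, y i • solitonCurvatureNumerator a b i j y = (2 * b) • wedge y 𝐞[j] := by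
  have hterm (i : ι) : y i • solitonCurvatureNumerator a b i j y =
      (1 - 2 * a) • (y i ^ 2 • wedge y 𝐞[j] - y j • y i • wedge y 𝐞[i]) +
        ((2 * a - 1) * ‖y‖ ^ 2 + 2 * b) • y i • wedge 𝐞[i] 𝐞[j] := by
    rw [solitonCurvatureNumerator]
    module
  simp only [hterm, Finset.sum_add_distrib, Finset.sum_sub_distrib, ← Finset.smul_sum,
    ← Finset.sum_smul, sum_coord_smul_wedge_single, sum_coord_smul_single_wedge, wedge_self,
    ← EuclideanSpace.real_norm_sq_eq]
  module

theorem differentiable_solitonCurvatureNumerator (i j : ι) :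
    Differentiable ℝ (solitonCurvatureNumerator a b i j) := by
  have hwedge (l : ι) := differentiable_wedge_left 𝐞[l]
  have hsq := differentiable_mul_norm_sq_add (ι := ι) (a := 2 * a - 1) (b := 2 * b)
  unfold solitonCurvatureNumerator
  fun_prop

theorem partialDeriv_solitonCurvatureNumerator (k i j : ι) :
    partialDeriv k (solitonCurvatureNumerator a b i j) y =
      (1 - 2 * a) • ((if k = i then 1 else 0 : ℝ) • wedge y 𝐞[j] + y i • wedge 𝐞[k] 𝐞[j] -
        ((if k = j then 1 else 0 : ℝ) • wedge y 𝐞[i] + y j • wedge 𝐞[k] 𝐞[i]) -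
        (2 * y k) • wedge 𝐞[i] 𝐞[j]) := by
  have hcoord (l : ι) : DifferentiableAt ℝ (fun z : EuclideanSpace ℝ ι => z l) y := by fun_prop
  have hwedge (l : ι) := differentiable_wedge_left 𝐞[l] y
  have hprod (l m : ι) : DifferentiableAt ℝ (fun z => z l • wedge z 𝐞[m]) y :=
    (hcoord l).fun_smul (hwedge m)
  have hsq := differentiable_mul_norm_sq_add (a := 2 * a - 1) (b := 2 * b) y
  have hexp : solitonCurvatureNumerator a b i j =
      (1 - 2 * a) • ((fun z => z i • wedge z 𝐞[j]) - fun z => z j • wedge z 𝐞[i]) +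
        fun z => ((2 * a - 1) * ‖z‖ ^ 2 + 2 * b) • wedge 𝐞[i] 𝐞[j] := rfl
  rw [hexp, partialDeriv_add (((hprod i j).sub (hprod j i)).const_smul _) (hsq.smul_const _),
    partialDeriv_const_smul ((hprod i j).sub (hprod j i)),
    partialDeriv_sub (hprod i j) (hprod j i), partialDeriv_smul (hcoord i) (hwedge j),
    partialDeriv_smul (hcoord j) (hwedge i), partialDeriv_smul_const hsq,
    partialDeriv_mul_norm_sq_add, partialDeriv_wedge, partialDeriv_wedge, partialDeriv_coord,
    partialDeriv_coord]
  module

theorem sum_partialDeriv_solitonCurvatureNumerator (j : ι) :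
    ∑ i, partialDeriv i (solitonCurvatureNumerator a b i j) y =
      ((1 - 2 * a) * (Fintype.card ι - 2)) • wedge y 𝐞[j] := by
  simp only [partialDeriv_solitonCurvatureNumerator, wedge_self, if_true, ite_smul, one_smul,
    zero_smul, smul_zero, mul_smul, ← Finset.smul_sum, Finset.sum_sub_distrib,
    Finset.sum_add_distrib, sum_coord_smul_single_wedge, Finset.sum_const, Finset.card_univ,
    Finset.sum_ite_eq', Finset.mem_univ, ← Nat.cast_smul_eq_nsmul ℝ]
  module

theorem sum_lie_wedge_solitonCurvatureNumerator (j : ι) :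
    ∑ i, ⁅wedge y 𝐞[i], solitonCurvatureNumerator a b i j y⁆ =
      (((2 * a - 1) * ‖y‖ ^ 2 + 2 * b) * (Fintype.card ι - 2)) • wedge y 𝐞[j] := by
  have hterm (i : ι) : ⁅wedge y 𝐞[i], solitonCurvatureNumerator a b i j y⁆ =
      (1 - 2 * a) • (⁅y i • wedge y 𝐞[i], wedge y 𝐞[j]⁆ - y j • ⁅wedge y 𝐞[i], wedge y 𝐞[i]⁆) +
        ((2 * a - 1) * ‖y‖ ^ 2 + 2 * b) • ⁅wedge y 𝐞[i], wedge 𝐞[i] 𝐞[j]⁆ := by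
    simp only [solitonCurvatureNumerator, lie_add, lie_sub, lie_smul, smul_lie]
  simp only [hterm, Finset.sum_add_distrib, ← Finset.smul_sum, sum_lie_wedge_single_wedge_single,
    lie_self, smul_zero, sub_zero, ← sum_lie, sum_coord_smul_wedge_single, wedge_self, zero_lie,
    zero_add, mul_smul]

theorem curvatureDiv_solitonConnection (h : ∀ z : EuclideanSpace ℝ ι, a * ‖z‖ ^ 2 + b ≠ 0)
    (j : ι) :
    curvatureDiv (solitonConnection a b) j y =
      (((a * ‖y‖ ^ 2 + b)⁻¹ ^ 2 * (1 - 2 * a) + (a * ‖y‖ ^ 2 + b)⁻¹ ^ 3 *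
        ((2 * a - 1) * ‖y‖ ^ 2 + 2 * b)) * (Fintype.card ι - 2) -
          8 * a * b * (a * ‖y‖ ^ 2 + b)⁻¹ ^ 3) • wedge y 𝐞[j] := by
  have hφ := (differentiable_mul_norm_sq_add y).fun_inv (h y)
  have hterm (i : ι) : covDeriv (solitonConnection a b) i
      (fun z => (a * ‖z‖ ^ 2 + b)⁻¹ ^ 2 • solitonCurvatureNumerator a b i j z) y =
      (-4 * a * (a * ‖y‖ ^ 2 + b)⁻¹ ^ 3) • y i • solitonCurvatureNumerator a b i j y +
        (a * ‖y‖ ^ 2 + b)⁻¹ ^ 2 • partialDeriv i (solitonCurvatureNumerator a b i j) y +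
        (a * ‖y‖ ^ 2 + b)⁻¹ ^ 3 • ⁅wedge y 𝐞[i], solitonCurvatureNumerator a b i j y⁆ := by
    rw [covDeriv_smul (hφ.fun_pow 2) (differentiable_solitonCurvatureNumerator i j y),
      partialDeriv_pow hφ, partialDeriv_inv_mul_norm_sq_add (h y), covDeriv, solitonConnection,
      smul_lie]
    match_scalars <;> ring
  simp only [curvatureDiv, curvature_solitonConnection h, hterm, Finset.sum_add_distrib,
    ← Finset.smul_sum, sum_coord_smul_solitonCurvatureNumerator,
    sum_partialDeriv_solitonCurvatureNumerator, sum_lie_wedge_solitonCurvatureNumerator]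
  module

theorem sum_coord_smul_curvature_solitonConnection
    (h : ∀ z : EuclideanSpace ℝ ι, a * ‖z‖ ^ 2 + b ≠ 0) (j : ι) :
    ∑ i, y i • curvature (solitonConnection a b) i j y =
      (2 * b * (a * ‖y‖ ^ 2 + b)⁻¹ ^ 2) • wedge y 𝐞[j] := by
  simp only [curvature_solitonConnection h, smul_comm (y _) ((a * ‖y‖ ^ 2 + b)⁻¹ ^ 2),
    ← Finset.smul_sum, sum_coord_smul_solitonCurvatureNumerator]
  module

theorem isShrinkingSoliton_solitonConnection (h : ∀ z : EuclideanSpace ℝ ι, a * ‖z‖ ^ 2 + b ≠ 0)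
    (ha : (Fintype.card ι : ℝ) = 8 * a ^ 2 + 2) (hb : b = 8 * a * (1 - a) * (2 * a - 1)) :
    IsShrinkingSoliton (solitonConnection (ι := ι) a b) := by
  intro j y
  rw [curvatureDiv_solitonConnection h, sum_coord_smul_curvature_solitonConnection h, smul_smul, ha]
  congr 1
  have hinv : (a * ‖y‖ ^ 2 + b)⁻¹ ^ 2 = (a * ‖y‖ ^ 2 + b)⁻¹ ^ 3 * (a * ‖y‖ ^ 2 + b) := by
    field [h y]
  linear_combination (8 * a ^ 2 * (1 - 2 * a) - b) * hinv -
    (a * ‖y‖ ^ 2 + b)⁻¹ ^ 3 * (a * ‖y‖ ^ 2 + b) * hb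

theorem linearizedFlow_curvature_solitonConnection
    (h : ∀ z : EuclideanSpace ℝ ι, a * ‖z‖ ^ 2 + b ≠ 0)
    (ha : (Fintype.card ι : ℝ) = 8 * a ^ 2 + 2) (hb : b = 8 * a * (1 - a) * (2 * a - 1))
    (α j : ι) :
    linearizedFlow (solitonConnection a b) (curvature (solitonConnection a b) α) j y =
      (1 / 2 : ℝ) • curvature (solitonConnection a b) α j y :=
  linearizedFlow_curvature_of_isShrinkingSoliton (contDiff_solitonConnection h)
    (isShrinkingSoliton_solitonConnection h ha hb) (sum_partialDeriv_solitonConnection (h y))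
    sum_coord_smul_solitonConnection α j

end SolitonConnection

section Coordinates

open scoped Matrix.Norms.Operator

attribute [local instance] LieRing.ofAssociativeRing

variable {n : ℕ}

theorem eq_eight_mul_aC_sq_add_two (hn : 2 ≤ n) : (n : ℝ) = 8 * aC n ^ 2 + 2 := by
  have hn₀ : (0 : ℝ) ≤ n - 2 := sub_nonneg.mpr (by exact_mod_cast hn)
  rw [aC, div_pow, mul_pow, Real.sq_sqrt hn₀, Real.sq_sqrt zero_le_two]
  ring

theorem aC_nonneg : 0 ≤ aC n := by
  unfold aC
  positivity

theorem bC_eq (hn : 2 ≤ n) : bC n = 8 * aC n * (1 - aC n) * (2 * aC n - 1) := by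
  have ha := eq_eight_mul_aC_sq_add_two hn
  have hsqrt : √(2 * (n : ℝ) - 4) = 4 * aC n := by
    rw [show 2 * (n : ℝ) - 4 = (4 * aC n) ^ 2 by rw [ha]; ring, Real.sqrt_sq]
    exact mul_nonneg (by norm_num) aC_nonneg
  rw [bC, hsqrt, ha]
  ring

theorem bC_pos (hn : 5 ≤ n) (hn' : n ≤ 9) : 0 < bC n := by
  have ha := eq_eight_mul_aC_sq_add_two (n := n) (by lia)
  have ha₀ := aC_nonneg (n := n)
  have h₅ : (5 : ℝ) ≤ n := by exact_mod_cast hn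
  have h₉ : (n : ℝ) ≤ 9 := by exact_mod_cast hn'
  have hlt : aC n < 1 := by nlinarith
  have hgt : 1 / 2 < aC n := by nlinarith
  rw [bC_eq (by lia)]
  exact mul_pos (mul_pos (by linarith) (sub_pos.mpr hlt)) (by linarith)

theorem aC_mul_norm_sq_add_bC_pos (hn : 5 ≤ n) (hn' : n ≤ 9) (z : En n) :
    0 < aC n * ‖z‖ ^ 2 + bC n :=
  add_pos_of_nonneg_of_pos (mul_nonneg aC_nonneg (sq_nonneg _)) (bC_pos hn hn')

theorem brkt_eq_lie (A B : Matrix (Fin n) (Fin n) ℝ) : brkt A B = ⁅A, B⁆ := by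
  ext μ ν
  simp [brkt, Ring.lie_def, Matrix.mul_apply, Finset.sum_sub_distrib]

theorem Wc_eq_solitonConnection (i : Fin n) :
    Wc i = solitonConnection (aC n) (bC n) i := by
  ext z μ ν
  simp [Wc, sigmaM, solitonConnection, wedge_eq_vecMulVec, Matrix.vecMulVec_apply, Pi.single_apply,
    div_eq_inv_mul, eq_comm]

theorem pder_entry_eq_partialDeriv {u : En n → Matrix (Fin n) (Fin n) ℝ} {y : En n}
    (hu : DifferentiableAt ℝ u y) (i μ ν : Fin n) :
    pder i (fun z => u z μ ν) y = partialDeriv i u y μ ν := by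
  let e := (Matrix.entryLinearMap ℝ ℝ μ ν).toContinuousLinearMap
  rw [pder, ← EuclideanSpace.basisFun_apply]
  exact DFunLike.congr_fun (e.hasFDerivAt.comp y hu.hasFDerivAt).fderiv _

theorem pderM_eq_partialDeriv {u : En n → Matrix (Fin n) (Fin n) ℝ} {y : En n}
    (hu : DifferentiableAt ℝ u y) (i : Fin n) : pderM i u y = partialDeriv i u y := by
  ext μ ν
  exact pder_entry_eq_partialDeriv hu i μ ν

theorem lapM_eq_sum_partialDeriv {u : En n → Matrix (Fin n) (Fin n) ℝ} (hu : ContDiff ℝ 2 u)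
    (y : En n) : lapM u y = ∑ i, partialDeriv i (partialDeriv i u) y := by
  have hu' (i : Fin n) : Differentiable ℝ (partialDeriv i u) :=
    (contDiff_partialDeriv (k := 1) hu (by norm_num) i).differentiable one_ne_zero
  ext μ ν
  simp only [lapM, lapS, pder_entry_eq_partialDeriv (hu.differentiable two_ne_zero _),
    pder_entry_eq_partialDeriv (hu' _ _)]
  exact (Matrix.sum_apply ..).symm

theorem Fc_eq_curvature (h : ∀ z : En n, aC n * ‖z‖ ^ 2 + bC n ≠ 0) (i j : Fin n) :
    Fc i j = curvature (solitonConnection (aC n) (bC n)) i j := by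
  have hW (k : Fin n) (z : En n) : DifferentiableAt ℝ (solitonConnection (aC n) (bC n) k) z :=
    (contDiff_solitonConnection (k := 1) h k).differentiable one_ne_zero z
  funext z
  simp only [Fc, Wc_eq_solitonConnection]
  rw [pderM_eq_partialDeriv (hW _ _), pderM_eq_partialDeriv (hW _ _), brkt_eq_lie]
  rfl

theorem Lop_eq_linearizedFlow (h : ∀ z : En n, aC n * ‖z‖ ^ 2 + bC n ≠ 0)
    {u : Fin n → En n → Matrix (Fin n) (Fin n) ℝ} (hu : ∀ i, ContDiff ℝ 2 (u i)) (y : En n)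
    (j : Fin n) :
    Lop (fun z i => u i z) y j = linearizedFlow (solitonConnection (aC n) (bC n)) u j y := by
  have hdiff : DifferentiableAt ℝ (u j) y := (hu j).differentiable two_ne_zero y
  simp only [Lop, Wc_eq_solitonConnection, Fc_eq_curvature h]
  rw [lapM_eq_sum_partialDeriv (hu j)]
  simp only [pderM_eq_partialDeriv hdiff, brkt_eq_lie]
  rfl

theorem Lop_Fc_eq_linearizedFlow (h : ∀ z : En n, aC n * ‖z‖ ^ 2 + bC n ≠ 0) (α j : Fin n)
    (y : En n) :
    Lop (fun z i => Fc α i z) y j =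
      linearizedFlow (solitonConnection (aC n) (bC n))
        (curvature (solitonConnection (aC n) (bC n)) α) j y := by
  simp only [Fc_eq_curvature h]
  exact Lop_eq_linearizedFlow h (contDiff_curvature (contDiff_solitonConnection h (k := 3))
    (by norm_num) α) y j

end Coordinates

/-- For each `α`, the tuple `F_α = (F_{α1},…,F_{αn})` of curvature components of the soliton `W`
satisfies `L(F_α) = (1/2)·F_α` pointwise; i.e. each `F_α` is an eigenfunction of `−L` with
eigenvalue `−1/2`, corresponding to spatial translations of the soliton. -/
theorem spatial_translation_eigenfunction (n : ℕ) (hn : 5 ≤ n) (hn' : n ≤ 9)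
    (α : Fin n) (y : En n) (j : Fin n) :
    Lop (fun z i => Fc α i z) y j = (1 / 2 : ℝ) • Fc α j y := by
  have h (z : En n) : aC n * ‖z‖ ^ 2 + bC n ≠ 0 := (aC_mul_norm_sq_add_bC_pos hn hn' z).ne'
  have ha : (Fintype.card (Fin n) : ℝ) = 8 * aC n ^ 2 + 2 := by
    simpa using eq_eight_mul_aC_sq_add_two (by lia)
  have hb : bC n = 8 * aC n * (1 - aC n) * (2 * aC n - 1) := bC_eq (by lia)
  rw [Lop_Fc_eq_linearizedFlow h, Fc_eq_curvature h]
  exact linearizedFlow_curvature_solitonConnection h ha hb α j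
end

section
/- Exponentially weighted bound for forward Duhamel integrals: let 0 < δ < λ₀ ≤ λ be real numbers and let h: [0,∞) → ℝ be measurable with ∫₀^∞ e^{2δσ} h(σ)² dσ < ∞. Then for every τ ≥ 0, λ·(∫₀^τ e^{λ(σ−τ)} h(σ) dσ)² ≤ (λ₀/(2(λ₀ − δ)))·e^{−2δτ}·∫₀^∞ e^{2δσ} h(σ)² dσ. -/
open MeasureTheory

/-!
Put `κ = λ - δ` and `g(σ) = e^{δσ} h(σ)`. Then `e^{λ(σ-τ)} h(σ) = e^{-δτ} e^{κ(σ-τ)} g(σ)`, so the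
weight leaves only the factor `e^{-2δτ}` after squaring, and the rest is the Cauchy–Schwarz
inequality against the kernel `e^{κ(σ-τ)}`, whose squared `L²` norm on `(-∞, τ]` is `1 / (2κ)`. The
resulting constant `λ / (2(λ - δ))` is decreasing in `λ`.
-/

theorem antitoneOn_div_sub_const {𝕜 : Type*} [Field 𝕜] [LinearOrder 𝕜] [IsStrictOrderedRing 𝕜]
    {c : 𝕜} (hc : 0 ≤ c) : AntitoneOn (fun x => x / (x - c)) (Set.Ioi c) := by
  intro a ha b hb hab
  beta_reduce
  rw [div_le_div_iff₀ (sub_pos.mpr hb) (sub_pos.mpr ha)]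
  linarith [mul_le_mul_of_nonneg_right hab hc]

section CauchySchwarz

variable {α 𝕜 E : Type*} [MeasurableSpace α] {μ : Measure α} [NormedField 𝕜]
  [NormedAddCommGroup E] [NormedSpace ℝ E] [NormedSpace 𝕜 E]

theorem sq_norm_integral_smul_le {f : α → 𝕜} {g : α → E} (hf : MemLp f 2 μ) (hg : MemLp g 2 μ) :
    ‖∫ x, f x • g x ∂μ‖ ^ 2 ≤ (∫ x, ‖f x‖ ^ 2 ∂μ) * ∫ x, ‖g x‖ ^ 2 ∂μ := by
  have hfnorm : MemLp (fun x => ‖f x‖) (ENNReal.ofReal 2) μ := by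
    simpa only [ENNReal.ofReal_ofNat] using hf.norm
  have hgnorm : MemLp (fun x => ‖g x‖) (ENNReal.ofReal 2) μ := by
    simpa only [ENNReal.ofReal_ofNat] using hg.norm
  have cauchy_schwarz : ∫ x, ‖f x‖ * ‖g x‖ ∂μ ≤ √(∫ x, ‖f x‖ ^ 2 ∂μ) * √(∫ x, ‖g x‖ ^ 2 ∂μ) := by
    simpa only [norm_norm, Real.rpow_two, ← Real.sqrt_eq_rpow] using
      integral_mul_norm_le_Lp_mul_Lq Real.HolderConjugate.two_two hfnorm hgnorm
  calc ‖∫ x, f x • g x ∂μ‖ ^ 2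
      ≤ (∫ x, ‖f x‖ * ‖g x‖ ∂μ) ^ 2 := by
        gcongr
        simpa only [norm_smul] using norm_integral_le_integral_norm fun x => f x • g x
    _ ≤ (√(∫ x, ‖f x‖ ^ 2 ∂μ) * √(∫ x, ‖g x‖ ^ 2 ∂μ)) ^ 2 := by gcongr
    _ = (∫ x, ‖f x‖ ^ 2 ∂μ) * ∫ x, ‖g x‖ ^ 2 ∂μ := by
        rw [mul_pow, Real.sq_sqrt (by positivity), Real.sq_sqrt (by positivity)]

end CauchySchwarz

theorem sq_exp_mul_sub (κ σ τ : ℝ) :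
    Real.exp (κ * (σ - τ)) ^ 2 = Real.exp (-(2 * κ * τ)) * Real.exp (2 * κ * σ) := by
  rw [← Real.exp_nat_mul, ← Real.exp_add]
  ring_nf

theorem memLp_two_exp_mul_sub_Iic {κ : ℝ} (hκ : 0 < κ) (τ : ℝ) :
    MemLp (fun σ => Real.exp (κ * (σ - τ))) 2 (volume.restrict (Set.Iic τ)) := by
  rw [memLp_two_iff_integrable_sq (by fun_prop)]
  simp only [sq_exp_mul_sub]
  exact (integrableOn_exp_mul_Iic (by positivity) τ).const_mul _

theorem integral_sq_exp_mul_sub_Iic {κ : ℝ} (hκ : 0 < κ) (τ : ℝ) :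
    ∫ σ in Set.Iic τ, Real.exp (κ * (σ - τ)) ^ 2 = 1 / (2 * κ) := by
  simp only [sq_exp_mul_sub]
  rw [integral_const_mul, integral_exp_mul_Iic (by positivity), mul_div_assoc', ← Real.exp_add,
    neg_add_cancel, Real.exp_zero]

section Duhamel

variable {E : Type*} [NormedAddCommGroup E] [NormedSpace ℝ E] {s : Set ℝ} {τ : ℝ}

theorem sq_norm_setIntegral_exp_smul_le {κ : ℝ} (hκ : 0 < κ) (hs : s ⊆ Set.Iic τ) {g : ℝ → E}
    (hg : MemLp g 2 (volume.restrict s)) :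
    ‖∫ σ in s, Real.exp (κ * (σ - τ)) • g σ‖ ^ 2 ≤ 1 / (2 * κ) * ∫ σ in s, ‖g σ‖ ^ 2 := by
  have hkernel := memLp_two_exp_mul_sub_Iic hκ τ
  have hkernel_le : ∫ σ in s, Real.exp (κ * (σ - τ)) ^ 2 ≤ 1 / (2 * κ) := by
    rw [← integral_sq_exp_mul_sub_Iic hκ τ]
    exact setIntegral_mono_set hkernel.integrable_sq (ae_of_all _ fun σ => sq_nonneg _)
      hs.eventuallyLE
  calc ‖∫ σ in s, Real.exp (κ * (σ - τ)) • g σ‖ ^ 2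
      ≤ (∫ σ in s, Real.exp (κ * (σ - τ)) ^ 2) * ∫ σ in s, ‖g σ‖ ^ 2 := by
        simpa only [Real.norm_eq_abs, sq_abs] using
          sq_norm_integral_smul_le (hkernel.mono_measure (Measure.restrict_mono_set _ hs)) hg
    _ ≤ 1 / (2 * κ) * ∫ σ in s, ‖g σ‖ ^ 2 := by gcongr

theorem sq_norm_exp_smul (δ σ : ℝ) (v : E) :
    ‖Real.exp (δ * σ) • v‖ ^ 2 = Real.exp (2 * δ * σ) * ‖v‖ ^ 2 := by
  rw [norm_smul, Real.norm_of_nonneg (Real.exp_nonneg _), mul_pow, ← Real.exp_nat_mul,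
    Nat.cast_ofNat, mul_assoc]

theorem sq_norm_setIntegral_exp_smul_le_weighted {δ lam : ℝ} (hδ : δ < lam) (hs : s ⊆ Set.Iic τ)
    {h : ℝ → E} (hmeas : AEStronglyMeasurable h (volume.restrict s))
    (hint : IntegrableOn (fun σ => Real.exp (2 * δ * σ) * ‖h σ‖ ^ 2) s) :
    ‖∫ σ in s, Real.exp (lam * (σ - τ)) • h σ‖ ^ 2
      ≤ 1 / (2 * (lam - δ)) * Real.exp (-2 * δ * τ) *
          ∫ σ in s, Real.exp (2 * δ * σ) * ‖h σ‖ ^ 2 := by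
  have hfactor (σ : ℝ) : Real.exp (lam * (σ - τ)) • h σ =
      Real.exp (-δ * τ) • Real.exp ((lam - δ) * (σ - τ)) • Real.exp (δ * σ) • h σ := by
    simp only [smul_smul, ← Real.exp_add]
    ring_nf
  have hg : MemLp (fun σ => Real.exp (δ * σ) • h σ) 2 (volume.restrict s) := by
    rw [memLp_two_iff_integrable_sq_norm (by fun_prop)]
    simpa only [sq_norm_exp_smul, IntegrableOn] using hint
  have hbound := sq_norm_setIntegral_exp_smul_le (sub_pos.mpr hδ) hs hg
  simp only [sq_norm_exp_smul] at hbound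
  calc ‖∫ σ in s, Real.exp (lam * (σ - τ)) • h σ‖ ^ 2
      = Real.exp (-2 * δ * τ) *
          ‖∫ σ in s, Real.exp ((lam - δ) * (σ - τ)) • Real.exp (δ * σ) • h σ‖ ^ 2 := by
        simp only [hfactor]
        rw [integral_smul, sq_norm_exp_smul, mul_neg, neg_mul 2 δ]
    _ ≤ Real.exp (-2 * δ * τ) *
          (1 / (2 * (lam - δ)) * ∫ σ in s, Real.exp (2 * δ * σ) * ‖h σ‖ ^ 2) := by gcongr
    _ = 1 / (2 * (lam - δ)) * Real.exp (-2 * δ * τ) *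
          ∫ σ in s, Real.exp (2 * δ * σ) * ‖h σ‖ ^ 2 := by ring

theorem forward_duhamel_bound_general [CompleteSpace E] {δ lam₀ lam : ℝ} (hδ : 0 ≤ δ)
    (hδ₀ : δ < lam₀) (h₀ : lam₀ ≤ lam) {h : ℝ → E}
    (hmeas : AEStronglyMeasurable h (volume.restrict (Set.Ici 0)))
    (hint : IntegrableOn (fun σ => Real.exp (2 * δ * σ) * ‖h σ‖ ^ 2) (Set.Ici 0)) (hτ : 0 ≤ τ) :
    lam * ‖∫ σ in (0 : ℝ)..τ, Real.exp (lam * (σ - τ)) • h σ‖ ^ 2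
      ≤ (lam₀ / (2 * (lam₀ - δ))) * Real.exp (-2 * δ * τ) *
          ∫ σ in Set.Ici (0 : ℝ), Real.exp (2 * δ * σ) * ‖h σ‖ ^ 2 := by
  have hsub : Set.Ioc 0 τ ⊆ Set.Ici 0 := Set.Ioc_subset_Ioi_self.trans Set.Ioi_subset_Ici_self
  have hδlam : δ < lam := hδ₀.trans_le h₀
  have hlam : 0 ≤ lam := hδ.trans hδlam.le
  have hconst : lam / (2 * (lam - δ)) ≤ lam₀ / (2 * (lam₀ - δ)) := by
    rw [div_mul_eq_div_div_swap, div_mul_eq_div_div_swap]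
    gcongr ?_ / 2
    exact antitoneOn_div_sub_const hδ hδ₀ hδlam h₀
  rw [intervalIntegral.integral_of_le hτ]
  calc lam * ‖∫ σ in Set.Ioc 0 τ, Real.exp (lam * (σ - τ)) • h σ‖ ^ 2
      ≤ lam * (1 / (2 * (lam - δ)) * Real.exp (-2 * δ * τ) *
          ∫ σ in Set.Ioc 0 τ, Real.exp (2 * δ * σ) * ‖h σ‖ ^ 2) := by
        gcongr
        exact sq_norm_setIntegral_exp_smul_le_weighted hδlam Set.Ioc_subset_Iic_self
          (hmeas.mono_set hsub) (hint.mono_set hsub)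
    _ = lam / (2 * (lam - δ)) * Real.exp (-2 * δ * τ) *
          ∫ σ in Set.Ioc 0 τ, Real.exp (2 * δ * σ) * ‖h σ‖ ^ 2 := by ring
    _ ≤ lam₀ / (2 * (lam₀ - δ)) * Real.exp (-2 * δ * τ) *
          ∫ σ in Set.Ici (0 : ℝ), Real.exp (2 * δ * σ) * ‖h σ‖ ^ 2 := by
        gcongr ?_ * _ * ?_
        · have : 0 < lam₀ - δ := sub_pos.mpr hδ₀
          have : 0 < lam₀ := hδ.trans_lt hδ₀
          positivity
        · exact setIntegral_mono_set hint (ae_of_all _ fun σ => by positivity) hsub.eventuallyLE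

end Duhamel

/-- Exponentially weighted bound for forward Duhamel integrals: if `0 < δ < λ₀ ≤ λ` and
`h : [0,∞) → ℝ` is measurable with `∫₀^∞ e^{2δσ} h(σ)² dσ < ∞`, then for every `τ ≥ 0`,
`λ·(∫₀^τ e^{λ(σ−τ)} h(σ) dσ)² ≤ (λ₀/(2(λ₀ − δ)))·e^{−2δτ}·∫₀^∞ e^{2δσ} h(σ)² dσ`. -/
theorem forward_duhamel_bound (δ lam₀ lam : ℝ) (hδ : 0 < δ) (hδ₀ : δ < lam₀) (h₀ : lam₀ ≤ lam)
    (h : ℝ → ℝ) (hmeas : Measurable h)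
    (hint : IntegrableOn (fun σ => Real.exp (2 * δ * σ) * h σ ^ 2) (Set.Ici 0)) :
    ∀ τ : ℝ, 0 ≤ τ →
      lam * (∫ σ in (0 : ℝ)..τ, Real.exp (lam * (σ - τ)) * h σ) ^ 2
        ≤ (lam₀ / (2 * (lam₀ - δ))) * Real.exp (-2 * δ * τ) *
            ∫ σ in Set.Ici (0 : ℝ), Real.exp (2 * δ * σ) * h σ ^ 2 := by
  simpa only [Real.norm_eq_abs, sq_abs, smul_eq_mul] using fun τ hτ =>
    forward_duhamel_bound_general (τ := τ) hδ.le hδ₀ h₀ hmeas.aestronglyMeasurable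
      (by simpa only [Real.norm_eq_abs, sq_abs] using hint) hτ
end
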